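/- Let 2 ≤ d < D, and let C ⊆ ℝ^D be a d-dimensional convex cone contained in a d-dimensional spherical cone P^d[c, ψ] for some unit vector c and ψ ∈ (0, π/2). Then for every ε ∈ (0,1), the spherical measure of the ε-approximate cone satisfies μ(C^ε) ≤ (Γ(D/2)/(Γ((D−d+1)/2) · Γ((d−1)/2))) · ε^{D−d} · ∫₀^ψ sin^{d−2}x dx, where Γ is the Gamma function. -/

import Mathlib

open RealInnerProductSpace MeasureTheory

noncomputable section

/-- The `ε`-approximate cone of a convex cone `C`:
`C^ε = {w : w = u + v, u ∈ C, v ∈ span(C)^⊥, ‖v‖ ≤ ε‖w‖}`. -/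
def approxCone {E : Type*} [NormedAddCommGroup E] [InnerProductSpace ℝ E]
    (C : ConvexCone ℝ E) (ε : ℝ) : Set E :=
  {w | ∃ u ∈ C, ∃ v ∈ (Submodule.span ℝ (C : Set E))ᗮ, w = u + v ∧ ‖v‖ ≤ ε * ‖w‖}

/-- The spherical cone `P^d[c,θ] = {u ∈ U : ⟨c,u⟩ ≥ ‖u‖ cos θ}` with underlying subspace `U`. -/
def sphericalCone {E : Type*} [NormedAddCommGroup E] [InnerProductSpace ℝ E]
    (U : Submodule ℝ E) (c : E) (θ : ℝ) : Set E :=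
  {u | u ∈ U ∧ ‖u‖ * Real.cos θ ≤ ⟪c, u⟫}

/-- The normalized spherical measure `σ_{D−1}` on the unit sphere `S^{D−1} ⊆ ℝ^D`
(normalized so that `σ_{D−1}(S^{D−1}) = 1`). -/
def sphericalMeasure (D : ℕ) :
    Measure (Metric.sphere (0 : EuclideanSpace ℝ (Fin D)) 1) :=
  ((volume : Measure (EuclideanSpace ℝ (Fin D))).toSphere Set.univ)⁻¹ •
    (volume : Measure (EuclideanSpace ℝ (Fin D))).toSphere

/-- `μ(A) := σ_{D−1}(A ∩ S^{D−1})`, as a real number. -/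
def sphMu (D : ℕ) (A : Set (EuclideanSpace ℝ (Fin D))) : ℝ :=
  (sphericalMeasure D ((↑) ⁻¹' A)).toReal

/-!
Let `K` be a cone in a subspace `U`. A point of the unit ball whose projection to `U` lies in `K`
and whose angle with `U` is at most `arcsin ε` is described by its two projections, to `U` and to
`Uᗮ`. The norm of each projection is distributed as `r ^ n dr`, independently of the direction, so
polar coordinates in the quarter-plane of the two norms give the spherical measure of this
neighbourhood exactly: it is the measure of `K`, times the area of the unit sphere of `Uᗮ`, times
`∫ θ in 0..arcsin ε, cos θ ^ (dim U - 1) * sin θ ^ (dim Uᗮ - 1)`.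

The formula is used twice. A spherical cone is the neighbourhood of a half-line, which yields its
measure; and the approximate cone lies in the neighbourhood of a spherical cone in the span of `C`.
In the second case the integral is at most `ε ^ k / k` with `k = dim Uᗮ`, and the remaining constant
is compared with the stated one by log-convexity of `Γ`.
-/

open Real Set Module
open scoped ENNReal

section Conic

variable {E : Type*} [NormedAddCommGroup E] [NormedSpace ℝ E] {A : Set E}

/-- A set stable under multiplication by positive scalars. Unlike `ConvexCone`, no convexity is
required, so that the neighbourhoods of cones considered below qualify. -/
def IsConic (A : Set E) : Prop :=
  ∀ ⦃r : ℝ⦄, 0 < r → ∀ ⦃x⦄, x ∈ A → r • x ∈ A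

lemma IsConic.smul_mem_iff (hA : IsConic A) {r : ℝ} (hr : 0 < r) {x : E} : r • x ∈ A ↔ x ∈ A :=
  ⟨fun h ↦ by simpa [smul_smul, hr.ne'] using hA (inv_pos.2 hr) h, fun h ↦ hA hr h⟩

/-- The measure `r ^ n dr` on the half-line `r ≥ 0`. -/
def radialMeasure (n : ℕ) : Measure ℝ :=
  (volume.restrict (Ici 0)).withDensity fun r ↦ ENNReal.ofReal (r ^ n)

instance (n : ℕ) : SFinite (radialMeasure n) := by
  unfold radialMeasure
  infer_instance

lemma map_coe_volumeIoiPow (n : ℕ) :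
    (Measure.volumeIoiPow n).map (↑) = radialMeasure n := by
  ext s hs
  rw [Measure.map_apply measurable_subtype_coe hs, Measure.volumeIoiPow, radialMeasure,
    withDensity_apply _ (measurable_subtype_coe hs), withDensity_apply _ hs,
    Measure.restrict_restrict hs,
    setLIntegral_subtype measurableSet_Ioi _ fun r : ℝ ↦ ENNReal.ofReal (r ^ n),
    Subtype.image_preimage_coe, inter_comm]
  exact setLIntegral_congr ((ae_eq_refl s).inter Ioi_ae_eq_Ici)

lemma natCast_mul_radialMeasure_Iio_one {n : ℕ} (hn : n ≠ 0) :
    n * radialMeasure (n - 1) (Iio 1) = 1 := by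
  obtain ⟨n, rfl⟩ := Nat.exists_eq_succ_of_ne_zero hn
  have hIio : Measure.volumeIoiPow n (Subtype.val ⁻¹' Iio 1) =
      ENNReal.ofReal (1 ^ (n + 1) / (n + 1)) :=
    Measure.volumeIoiPow_apply_Iio n ⟨1, mem_Ioi.2 one_pos⟩
  rw [Nat.succ_sub_one, ← map_coe_volumeIoiPow,
    Measure.map_apply measurable_subtype_coe measurableSet_Iio, hIio, one_pow, one_div,
    ENNReal.ofReal_inv_of_pos (by positivity), ← Nat.cast_succ, ENNReal.ofReal_natCast]
  exact ENNReal.mul_inv_cancel (by simp) (by simp)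

variable [FiniteDimensional ℝ E] [Nontrivial E] [MeasurableSpace E] [BorelSpace E]
  (μ : Measure E) [μ.IsAddHaarMeasure]

lemma map_norm_restrict_of_isConic (hA : IsConic A) :
    (μ.restrict A).map (‖·‖) =
      μ.toSphere ((↑) ⁻¹' A) • radialMeasure (finrank ℝ E - 1) := by
  ext s hs
  have hpre : homeomorphUnitSphereProd E ⁻¹' (((↑) ⁻¹' A) ×ˢ ((↑) ⁻¹' s)) =
      (↑) ⁻¹' ((‖·‖) ⁻¹' s ∩ A) := by
    ext ⟨x, hx⟩
    have hx : 0 < ‖x‖ := norm_pos_iff.2 hx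
    simp [hA.smul_mem_iff (inv_pos.2 hx), and_comm]
  calc (μ.restrict A).map (‖·‖) s
      = μ ((‖·‖) ⁻¹' s ∩ A) := by
        rw [Measure.map_apply measurable_norm hs, Measure.restrict_apply (measurable_norm hs)]
    _ = μ.comap ((↑) : ({0}ᶜ : Set E) → E) ((↑) ⁻¹' ((‖·‖) ⁻¹' s ∩ A)) := by
        rw [comap_subtype_coe_apply (measurableSet_singleton 0).compl, Subtype.image_preimage_coe,
          inter_comm _ᶜ, ← sdiff_eq, measure_sdiff_null (measure_singleton 0)]
    _ = μ.toSphere ((↑) ⁻¹' A) * Measure.volumeIoiPow (finrank ℝ E - 1) ((↑) ⁻¹' s) := by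
        rw [← hpre, μ.measurePreserving_homeomorphUnitSphereProd.measure_preimage_emb
          (Homeomorph.measurableEmbedding _), Measure.prod_prod]
    _ = _ := by
        rw [← map_coe_volumeIoiPow, Measure.smul_apply,
          Measure.map_apply measurable_subtype_coe hs, smul_eq_mul]

lemma toSphere_preimage_coe_of_isConic (hA : IsConic A) :
    μ.toSphere ((↑) ⁻¹' A) = finrank ℝ E * μ (A ∩ Metric.ball 0 1) := by
  have hball : A ∩ Metric.ball 0 1 = (‖·‖) ⁻¹' Iio 1 ∩ A := by
    ext x
    simp [and_comm]
  rw [hball, ← Measure.restrict_apply (measurable_norm measurableSet_Iio),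
    ← Measure.map_apply measurable_norm measurableSet_Iio, map_norm_restrict_of_isConic μ hA,
    Measure.smul_apply, smul_eq_mul, mul_left_comm,
    natCast_mul_radialMeasure_Iio_one finrank_pos.ne', mul_one]

end Conic

section Gamma

lemma Gamma_add_mul_Gamma_le {a b h : ℝ} (ha : 0 < a) (hab : a ≤ b) (hh : 0 ≤ h) :
    Gamma (a + h) * Gamma b ≤ Gamma a * Gamma (b + h) := by
  rcases hab.eq_or_lt with rfl | hab
  · rw [mul_comm]
  rcases hh.eq_or_lt with rfl | hh
  · simp
  have hΓa := Gamma_pos_of_pos ha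
  have hΓb : 0 < Gamma (b + h) := Gamma_pos_of_pos (by linarith)
  -- `a + h = s * a + t * (b + h)` and `b = t * a + s * (b + h)`: interpolate twice and multiply.
  set s := (b - a) / (b - a + h) with hs
  set t := h / (b - a + h) with ht
  have : 0 < b - a := sub_pos.2 hab
  have hs0 : 0 < s := by positivity
  have ht0 : 0 < t := by positivity
  have hst : s + t = 1 := by rw [hs, ht]; field_simp
  have hah : s * a + t * (b + h) = a + h := by rw [hs, ht]; field_simp; ring
  have hb : t * a + s * (b + h) = b := by rw [hs, ht]; field_simp; ring
  have hle₁ := Gamma_mul_add_mul_le_rpow_Gamma_mul_rpow_Gamma ha (ha.trans (hab.trans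
    (lt_add_of_pos_right b hh))) hs0 ht0 hst
  have hle₂ := Gamma_mul_add_mul_le_rpow_Gamma_mul_rpow_Gamma ha (ha.trans (hab.trans
    (lt_add_of_pos_right b hh))) ht0 hs0 (by linarith)
  rw [hah] at hle₁
  rw [hb] at hle₂
  calc Gamma (a + h) * Gamma b
      ≤ (Gamma a ^ s * Gamma (b + h) ^ t) * (Gamma a ^ t * Gamma (b + h) ^ s) :=
        mul_le_mul hle₁ hle₂ (Gamma_pos_of_pos (ha.trans hab)).le (by positivity)
    _ = Gamma a ^ (s + t) * Gamma (b + h) ^ (s + t) := by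
        rw [rpow_add hΓa, rpow_add hΓb]
        ring
    _ = Gamma a * Gamma (b + h) := by rw [hst, rpow_one, rpow_one]

lemma Gamma_le_sqrt_pi_mul_Gamma_add_half {x : ℝ} (hx : 1 / 2 ≤ x) :
    Gamma x ≤ √π * Gamma (x + 1 / 2) := by
  have h := Gamma_add_mul_Gamma_le one_half_pos hx one_half_pos.le
  rwa [add_halves, Gamma_one, one_mul, Gamma_one_half_eq] at h

/-- The area `2 π ^ (n / 2) / Γ(n / 2)` of the unit sphere of an `n`-dimensional Euclidean space. -/
def unitSphereArea (n : ℕ) : ℝ :=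
  2 * √π ^ n / Gamma (n / 2)

lemma unitSphereArea_pos {n : ℕ} (hn : n ≠ 0) : 0 < unitSphereArea n := by
  have := Gamma_pos_of_pos (s := (n : ℝ) / 2) (by positivity)
  unfold unitSphereArea
  positivity

lemma toSphere_real_univ_eq_unitSphereArea (E : Type*) [NormedAddCommGroup E]
    [InnerProductSpace ℝ E] [FiniteDimensional ℝ E] [MeasurableSpace E] [BorelSpace E]
    [Nontrivial E] :
    (volume : Measure E).toSphere.real univ = unitSphereArea (finrank ℝ E) := by
  have hn : (0 : ℝ) < finrank ℝ E := mod_cast finrank_pos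
  have := Gamma_pos_of_pos (half_pos hn)
  rw [Measure.toSphere_real_apply_univ, measureReal_def, InnerProductSpace.volume_ball,
    ENNReal.ofReal_one, one_pow, one_mul, Gamma_add_one (by positivity),
    ENNReal.toReal_ofReal (by positivity), unitSphereArea]
  field_simp

lemma unitSphereArea_mul_unitSphereArea_le (a : ℕ) {k : ℕ} (ha : a ≠ 0) (hk : k ≠ 0) :
    unitSphereArea a * unitSphereArea k / k ≤
      Gamma ((a + k + 1 : ℕ) / 2) / (Gamma ((k + 1 : ℝ) / 2) * Gamma (a / 2)) *
        unitSphereArea (a + k + 1) := by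
  have := Gamma_pos_of_pos (s := (a : ℝ) / 2) (by positivity)
  have := Gamma_pos_of_pos (s := (k : ℝ) / 2) (by positivity)
  have := Gamma_pos_of_pos (s := (k + 1 : ℝ) / 2) (by positivity)
  have := Gamma_pos_of_pos (s := (a + k + 1 : ℕ) / 2) (by positivity)
  have hratio : Gamma ((k + 1) / 2) ≤ √π * (k / 2 * Gamma (k / 2)) := by
    have h := Gamma_le_sqrt_pi_mul_Gamma_add_half (x := (k + 1) / 2)
      (by linarith [k.cast_nonneg (α := ℝ)])
    rwa [show ((k : ℝ) + 1) / 2 + 1 / 2 = k / 2 + 1 by ring, Gamma_add_one (by positivity)] at h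
  unfold unitSphereArea
  rw [div_mul_div_comm, div_div, div_mul_div_comm, div_le_div_iff₀ (by positivity) (by positivity)]
  calc _ = 4 * √π ^ (a + k) * Gamma (a / 2) * Gamma ((a + k + 1 : ℕ) / 2) *
          Gamma ((k + 1) / 2) := by ring
    _ ≤ 4 * √π ^ (a + k) * Gamma (a / 2) * Gamma ((a + k + 1 : ℕ) / 2) *
          (√π * (k / 2 * Gamma (k / 2))) := by gcongr
    _ = _ := by ring

end Gamma

section Planar

/-- The part of the open unit disc in the closed first quadrant lying at polar angle at most
`arcsin ε`, with the angular condition written as a bound on the distance to the first axis. -/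
def circularSector (ε : ℝ) : Set (ℝ × ℝ) :=
  {p ∈ Ici 0 ×ˢ Ici 0 | p.2 ≤ ε * √(p.1 ^ 2 + p.2 ^ 2) ∧ p.1 ^ 2 + p.2 ^ 2 < 1}

lemma measurableSet_circularSector (ε : ℝ) : MeasurableSet (circularSector ε) := by
  unfold circularSector
  measurability

lemma polarCoord_symm_mem_circularSector_iff {ε : ℝ} {p : ℝ × ℝ} (hp : p ∈ polarCoord.target) :
    polarCoord.symm p ∈ circularSector ε ↔ p ∈ Ioo (0 : ℝ) 1 ×ˢ Icc 0 (arcsin ε) := by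
  obtain ⟨r, θ⟩ := p
  obtain ⟨hr, hθ⟩ : 0 < r ∧ θ ∈ Ioo (-π) π := by simpa using hp
  have hnorm : (r * cos θ) ^ 2 + (r * sin θ) ^ 2 = r ^ 2 := by
    rw [mul_pow, mul_pow, ← mul_add, cos_sq_add_sin_sq, mul_one]
  have hsin : 0 ≤ sin θ ↔ 0 ≤ θ :=
    ⟨fun h ↦ not_lt.1 fun hθ' ↦ h.not_gt (sin_neg_of_neg_of_neg_pi_lt hθ' hθ.1),
      fun h ↦ sin_nonneg_of_nonneg_of_le_pi h hθ.2.le⟩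
  have hcos : 0 ≤ θ → (0 ≤ cos θ ↔ θ ≤ π / 2) := fun hθ' ↦
    ⟨fun h ↦ not_lt.1 fun hlt ↦ h.not_gt (cos_neg_of_pi_div_two_lt_of_lt hlt (by linarith [hθ.2])),
      fun h ↦ cos_nonneg_of_neg_pi_div_two_le_of_le (by linarith [pi_pos]) h⟩
  have harcsin : 0 ≤ θ → θ ≤ π / 2 → (sin θ ≤ ε ↔ θ ≤ arcsin ε) := fun h₀ h₁ ↦
    (le_arcsin_iff_sin_le' ⟨by linarith [pi_pos], h₁⟩).symm
  have := arcsin_le_pi_div_two ε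
  simp only [circularSector, polarCoord_symm_apply, mem_ofPred_eq, mem_prod, mem_Ici, mem_Ioo,
    mem_Icc, hnorm, sqrt_sq hr.le, mul_comm ε r, mul_le_mul_iff_right₀ hr, sq_lt_one_iff₀ hr.le,
    mul_nonneg_iff_of_pos_left hr, hsin, hr, true_and]
  constructor
  · rintro ⟨⟨hc, h₀⟩, hle, hlt⟩
    exact ⟨hlt, h₀, (harcsin h₀ ((hcos h₀).1 hc)).1 hle⟩
  · rintro ⟨hlt, h₀, hle⟩
    have h₁ := hle.trans this
    exact ⟨⟨(hcos h₀).2 h₁, h₀⟩, (harcsin h₀ h₁).2 hle, hlt⟩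

lemma radialMeasure_prod (a b : ℕ) :
    (radialMeasure a).prod (radialMeasure b) =
      (volume.restrict (Ici 0 ×ˢ Ici 0)).withDensity
        fun p ↦ ENNReal.ofReal (p.1 ^ a) * ENNReal.ofReal (p.2 ^ b) := by
  rw [radialMeasure, radialMeasure, prod_withDensity (by fun_prop) (by fun_prop),
    Measure.prod_restrict, ← Measure.volume_eq_prod]

lemma indicator_circularSector_polarCoord_symm (a b : ℕ) (ε : ℝ) {p : ℝ × ℝ}
    (hp : p ∈ polarCoord.target) :
    ENNReal.ofReal p.1 • (circularSector ε).indicator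
        (fun p ↦ ENNReal.ofReal (p.1 ^ a) * ENNReal.ofReal (p.2 ^ b)) (polarCoord.symm p) =
      (Ioo (0 : ℝ) 1 ×ˢ Icc 0 (arcsin ε)).indicator (fun p ↦
        ENNReal.ofReal (p.1 ^ (a + b + 1)) * ENNReal.ofReal (cos p.2 ^ a * sin p.2 ^ b)) p := by
  by_cases hmem : p ∈ Ioo (0 : ℝ) 1 ×ˢ Icc 0 (arcsin ε)
  · have hr := hmem.1.1.le
    have hcos : 0 ≤ cos p.2 := cos_nonneg_of_neg_pi_div_two_le_of_le
      (by linarith [hmem.2.1, pi_pos]) (hmem.2.2.trans (arcsin_le_pi_div_two ε))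
    rw [indicator_of_mem hmem,
      indicator_of_mem ((polarCoord_symm_mem_circularSector_iff hp).2 hmem),
      polarCoord_symm_apply, smul_eq_mul, ← ENNReal.ofReal_mul (by positivity),
      ← ENNReal.ofReal_mul hr, ← ENNReal.ofReal_mul (by positivity)]
    ring_nf
  · rw [indicator_of_notMem hmem,
      indicator_of_notMem (mt (polarCoord_symm_mem_circularSector_iff hp).1 hmem), smul_zero]

lemma radialMeasure_prod_circularSector (a b : ℕ) (ε : ℝ) :
    (radialMeasure a).prod (radialMeasure b) (circularSector ε) =
      radialMeasure (a + b + 1) (Iio 1) *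
        ∫⁻ θ in Icc 0 (arcsin ε), ENNReal.ofReal (cos θ ^ a * sin θ ^ b) := by
  have hS := measurableSet_circularSector ε
  have hquadrant : circularSector ε ⊆ Ici 0 ×ˢ Ici 0 := fun _ hp ↦ hp.1
  have htarget : Ioo (0 : ℝ) 1 ×ˢ Icc 0 (arcsin ε) ⊆ polarCoord.target := by
    rw [polarCoord_target]
    exact prod_mono Ioo_subset_Ioi_self fun θ hθ ↦
      ⟨by linarith [hθ.1, pi_pos], by linarith [hθ.2, arcsin_le_pi_div_two ε, pi_pos]⟩
  calc (radialMeasure a).prod (radialMeasure b) (circularSector ε)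
      = ∫⁻ p, (circularSector ε).indicator
          (fun p ↦ ENNReal.ofReal (p.1 ^ a) * ENNReal.ofReal (p.2 ^ b)) p := by
        rw [radialMeasure_prod, withDensity_apply _ hS, Measure.restrict_restrict hS,
          inter_eq_left.2 hquadrant, lintegral_indicator hS]
    _ = ∫⁻ p in polarCoord.target, (Ioo (0 : ℝ) 1 ×ˢ Icc 0 (arcsin ε)).indicator (fun p ↦
          ENNReal.ofReal (p.1 ^ (a + b + 1)) *
            ENNReal.ofReal (cos p.2 ^ a * sin p.2 ^ b)) p := by
        rw [← lintegral_comp_polarCoord_symm]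
        exact setLIntegral_congr_fun polarCoord.open_target.measurableSet fun p hp ↦
          indicator_circularSector_polarCoord_symm a b ε hp
    _ = (∫⁻ r in Ioo (0 : ℝ) 1, ENNReal.ofReal (r ^ (a + b + 1))) *
          ∫⁻ θ in Icc 0 (arcsin ε), ENNReal.ofReal (cos θ ^ a * sin θ ^ b) := by
        rw [setLIntegral_indicator (measurableSet_Ioo.prod measurableSet_Icc),
          inter_eq_left.2 htarget, Measure.volume_eq_prod, ← Measure.prod_restrict]
        exact lintegral_prod_mul (f := fun r : ℝ ↦ ENNReal.ofReal (r ^ (a + b + 1)))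
          (g := fun θ ↦ ENNReal.ofReal (cos θ ^ a * sin θ ^ b)) (by fun_prop) (by fun_prop)
    _ = _ := by
        rw [radialMeasure, withDensity_apply _ measurableSet_Iio,
          Measure.restrict_restrict measurableSet_Iio, inter_comm, Ici_inter_Iio,
          setLIntegral_congr Ioo_ae_eq_Ico]

lemma cos_pow_mul_sin_pow_nonneg (a b : ℕ) {θ : ℝ} (hθ : θ ∈ Icc 0 (π / 2)) :
    0 ≤ cos θ ^ a * sin θ ^ b := by
  have hcos : 0 ≤ cos θ :=
    cos_nonneg_of_neg_pi_div_two_le_of_le (by linarith [hθ.1, pi_pos]) hθ.2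
  have hsin : 0 ≤ sin θ := sin_nonneg_of_nonneg_of_le_pi hθ.1 (by linarith [hθ.2, pi_pos])
  positivity

lemma integral_sin_pow_nonneg (n : ℕ) {α : ℝ} (hα : α ∈ Icc 0 π) :
    0 ≤ ∫ θ in 0..α, sin θ ^ n :=
  intervalIntegral.integral_nonneg hα.1 fun _ hθ ↦
    pow_nonneg (sin_nonneg_of_nonneg_of_le_pi hθ.1 (hθ.2.trans hα.2)) n

lemma lintegral_cos_pow_mul_sin_pow (a b : ℕ) {α : ℝ} (hα : α ∈ Icc 0 (π / 2)) :
    ∫⁻ θ in Icc 0 α, ENNReal.ofReal (cos θ ^ a * sin θ ^ b) =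
      ENNReal.ofReal (∫ θ in 0..α, cos θ ^ a * sin θ ^ b) := by
  rw [intervalIntegral.integral_of_le hα.1, ← integral_Icc_eq_integral_Ioc,
    ofReal_integral_eq_lintegral_ofReal (Continuous.integrableOn_Icc (by fun_prop))]
  filter_upwards [ae_restrict_mem measurableSet_Icc] with θ hθ
  exact cos_pow_mul_sin_pow_nonneg a b ⟨hθ.1, hθ.2.trans hα.2⟩

lemma integral_cos_pow_mul_sin_pow_le {a : ℕ} (ha : a ≠ 0) (b : ℕ) {ε : ℝ} (hε : 0 ≤ ε) :
    ∫ θ in 0..arcsin ε, cos θ ^ a * sin θ ^ b ≤ ε ^ (b + 1) / (b + 1) := by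
  have hα := arcsin_nonneg.2 hε
  have hsin : sin (arcsin ε) ≤ ε := (le_arcsin_iff_sin_le'
    ⟨by linarith [pi_pos], arcsin_le_pi_div_two ε⟩).1 le_rfl
  calc ∫ θ in 0..arcsin ε, cos θ ^ a * sin θ ^ b
      ≤ ∫ θ in 0..arcsin ε, sin θ ^ b * cos θ := by
        refine intervalIntegral.integral_mono_on hα
          (Continuous.intervalIntegrable (by fun_prop) _ _)
          (Continuous.intervalIntegrable (by fun_prop) _ _) fun θ hθ ↦ ?_
        have hα' := hθ.2.trans (arcsin_le_pi_div_two ε)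
        rw [mul_comm]
        exact mul_le_mul_of_nonneg_left
          (pow_le_of_le_one (cos_nonneg_of_neg_pi_div_two_le_of_le
            (by linarith [hθ.1, pi_pos]) hα') (cos_le_one θ) ha)
          (pow_nonneg (sin_nonneg_of_nonneg_of_le_pi hθ.1 (by linarith [pi_pos])) b)
    _ = sin (arcsin ε) ^ (b + 1) / (b + 1) := by
        simpa [integral_pow] using integral_sin_pow_mul_cos_pow_odd (a := 0) (b := arcsin ε) b 0
    _ ≤ ε ^ (b + 1) / (b + 1) := by
        have := sin_nonneg_of_nonneg_of_le_pi hα (by linarith [arcsin_le_pi_div_two ε, pi_pos])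
        gcongr

end Planar

section Tube

variable {E : Type*} [NormedAddCommGroup E] [InnerProductSpace ℝ E]

section Projection

variable {U : Submodule ℝ E} [U.HasOrthogonalProjection] {K : Set U}

/-- The vectors whose projection to `U` lies in `K` and whose angle with `U` is at most
`arcsin ε`. The `ε`-approximate cone of a cone `K` with linear span `U` is of this form. -/
def coneTube (U : Submodule ℝ E) [U.HasOrthogonalProjection] (K : Set U) (ε : ℝ) : Set E :=
  {x | U.orthogonalProjectionOnto x ∈ K ∧ ‖Uᗮ.orthogonalProjectionOnto x‖ ≤ ε * ‖x‖}

lemma isConic_coneTube (hK : IsConic K) (ε : ℝ) : IsConic (coneTube U K ε) := by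
  rintro r hr x ⟨hxK, hx⟩
  refine ⟨by simpa using hK hr hxK, ?_⟩
  rw [map_smul, norm_smul, norm_smul, mul_left_comm]
  gcongr

lemma norm_eq_sqrt_norm_orthogonalProjectionOnto (U : Submodule ℝ E)
    [U.HasOrthogonalProjection] (x : E) :
    ‖x‖ = √(‖U.orthogonalProjectionOnto x‖ ^ 2 + ‖Uᗮ.orthogonalProjectionOnto x‖ ^ 2) := by
  rw [← Submodule.norm_sq_eq_add_norm_sq_projection, sqrt_sq (norm_nonneg x)]

lemma coneTube_inter_ball_eq_preimage (K : Set U) (ε : ℝ) :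
    coneTube U K ε ∩ Metric.ball 0 1 =
      (fun x ↦ (U.orthogonalProjectionOnto x, Uᗮ.orthogonalProjectionOnto x)) ⁻¹'
        (Prod.map (‖·‖) (‖·‖) ⁻¹' circularSector ε ∩ K ×ˢ univ) := by
  ext x
  have hlt : ‖x‖ < 1 ↔ ‖U.orthogonalProjectionOnto x‖ ^ 2 +
      ‖Uᗮ.orthogonalProjectionOnto x‖ ^ 2 < 1 := by
    rw [← Submodule.norm_sq_eq_add_norm_sq_projection, sq_lt_one_iff₀ (norm_nonneg x)]
  simp only [coneTube, circularSector, mem_inter_iff, mem_ofPred_eq, mem_preimage, mem_prod,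
    Prod.map_apply, mem_Ici, norm_nonneg, mem_univ, and_true, true_and, mem_ball_zero_iff, hlt,
    ← norm_eq_sqrt_norm_orthogonalProjectionOnto]
  tauto

end Projection

variable [FiniteDimensional ℝ E] [MeasurableSpace E] [BorelSpace E]

lemma measurePreserving_orthogonalProjectionOnto_prod (U : Submodule ℝ E) :
    MeasurePreserving
      fun x ↦ (U.orthogonalProjectionOnto x, Uᗮ.orthogonalProjectionOnto x) := by
  simpa [Function.comp_def] using
    (WithLp.volume_preserving_ofLp U Uᗮ).comp U.orthogonalDecomposition.measurePreserving

variable {U : Submodule ℝ E} {K : Set U} [Nontrivial U] [Nontrivial Uᗮ]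

lemma volume_coneTube_inter_ball (hK : IsConic K) (hKm : MeasurableSet K) (ε : ℝ) :
    volume (coneTube U K ε ∩ Metric.ball 0 1) =
      (volume : Measure U).toSphere ((↑) ⁻¹' K) * (volume : Measure Uᗮ).toSphere univ *
        (radialMeasure (finrank ℝ U - 1)).prod (radialMeasure (finrank ℝ Uᗮ - 1))
          (circularSector ε) := by
  have hS := measurableSet_circularSector ε
  have hnorm : Measurable (Prod.map (‖·‖) (‖·‖) : U × Uᗮ → ℝ × ℝ) := by fun_prop
  have hUperp_norm := map_norm_restrict_of_isConic (volume : Measure Uᗮ) (A := univ)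
    fun _ _ _ _ ↦ mem_univ _
  rw [Measure.restrict_univ, preimage_univ] at hUperp_norm
  rw [coneTube_inter_ball_eq_preimage,
    (measurePreserving_orthogonalProjectionOnto_prod U).measure_preimage
      ((hnorm hS).inter (hKm.prod MeasurableSet.univ)).nullMeasurableSet,
    ← Measure.restrict_apply (hnorm hS), Measure.volume_eq_prod, ← Measure.prod_restrict,
    Measure.restrict_univ, ← Measure.map_apply hnorm hS,
    ← Measure.map_prod_map _ _ measurable_norm measurable_norm,
    map_norm_restrict_of_isConic volume hK, hUperp_norm, Measure.prod_smul_left,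
    Measure.prod_smul_right, smul_smul, Measure.smul_apply, smul_eq_mul]

theorem toSphere_coneTube (hK : IsConic K) (hKm : MeasurableSet K) (ε : ℝ) :
    (volume : Measure E).toSphere ((↑) ⁻¹' coneTube U K ε) =
      (volume : Measure U).toSphere ((↑) ⁻¹' K) * (volume : Measure Uᗮ).toSphere univ *
        ∫⁻ θ in Icc 0 (arcsin ε),
          ENNReal.ofReal (cos θ ^ (finrank ℝ U - 1) * sin θ ^ (finrank ℝ Uᗮ - 1)) := by
  have : Nontrivial E := U.subtype_injective.nontrivial
  have hU : 0 < finrank ℝ U := finrank_pos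
  have hUperp : 0 < finrank ℝ Uᗮ := finrank_pos
  have hdim : finrank ℝ U - 1 + (finrank ℝ Uᗮ - 1) + 1 = finrank ℝ E - 1 := by
    have := U.finrank_add_finrank_orthogonal
    omega
  rw [toSphere_preimage_coe_of_isConic _ (isConic_coneTube hK ε),
    volume_coneTube_inter_ball hK hKm, radialMeasure_prod_circularSector, hdim, mul_left_comm,
    ← mul_assoc (finrank ℝ E : ℝ≥0∞), natCast_mul_radialMeasure_Iio_one finrank_pos.ne', one_mul]

theorem toSphere_real_coneTube (hK : IsConic K) (hKm : MeasurableSet K) {ε : ℝ} (hε : 0 ≤ ε) :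
    (volume : Measure E).toSphere.real ((↑) ⁻¹' coneTube U K ε) =
      (volume : Measure U).toSphere.real ((↑) ⁻¹' K) * unitSphereArea (finrank ℝ Uᗮ) *
        ∫ θ in 0..arcsin ε, cos θ ^ (finrank ℝ U - 1) * sin θ ^ (finrank ℝ Uᗮ - 1) := by
  rw [measureReal_def, toSphere_coneTube hK hKm,
    lintegral_cos_pow_mul_sin_pow _ _ ⟨arcsin_nonneg.2 hε, arcsin_le_pi_div_two ε⟩,
    ENNReal.toReal_mul, ENNReal.toReal_mul, ← measureReal_def, ← measureReal_def,
    toSphere_real_univ_eq_unitSphereArea, ENNReal.toReal_ofReal]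
  exact intervalIntegral.integral_nonneg (arcsin_nonneg.2 hε) fun θ hθ ↦
    cos_pow_mul_sin_pow_nonneg _ _ ⟨hθ.1, hθ.2.trans (arcsin_le_pi_div_two ε)⟩

end Tube

section SphericalCone

variable {E : Type*} [NormedAddCommGroup E] [InnerProductSpace ℝ E] {c : E}

lemma isConic_sphericalCone (U : Submodule ℝ E) (c : E) (ψ : ℝ) :
    IsConic (sphericalCone U c ψ) := by
  rintro r hr x ⟨hxU, hx⟩
  refine ⟨U.smul_mem r hxU, ?_⟩
  rw [norm_smul, norm_of_nonneg hr.le, inner_smul_right, mul_assoc]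
  gcongr

/-- The half-line spanned by `c`, as a subset of the line `ℝ ∙ c`; meant for `c ≠ 0`. -/
def halfLine (c : E) : Set (ℝ ∙ c) :=
  {y | 0 ≤ ⟪c, (y : E)⟫}

lemma isConic_halfLine (c : E) : IsConic (halfLine c) := fun r hr y hy ↦ by
  simpa [halfLine, inner_smul_right, hr] using hy

lemma inner_orthogonalProjectionOnto_span_singleton (c x : E) :
    ⟪c, ((ℝ ∙ c).orthogonalProjectionOnto x : E)⟫ = ⟪c, x⟫ :=
  Submodule.inner_orthogonalProjectionOnto_eq_of_mem_left
    (⟨c, Submodule.mem_span_singleton_self c⟩ : ℝ ∙ c) x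

lemma norm_orthogonalProjectionOnto_span_singleton (hc : ‖c‖ = 1) (x : E) :
    ‖(ℝ ∙ c).orthogonalProjectionOnto x‖ = |⟪c, x⟫| := by
  rw [Submodule.coe_norm, ← Submodule.starProjection_apply,
    Submodule.starProjection_unit_singleton ℝ hc, norm_smul, hc, mul_one, norm_eq_abs]

lemma sphericalCone_top_eq_coneTube (hc : ‖c‖ = 1) {ψ : ℝ} (hψ : ψ ∈ Icc 0 (π / 2)) :
    sphericalCone ⊤ c ψ = coneTube (ℝ ∙ c) (halfLine c) (sin ψ) := by
  have hcos : 0 ≤ cos ψ := cos_nonneg_of_neg_pi_div_two_le_of_le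
    (by linarith [hψ.1, pi_pos]) hψ.2
  have hsin : 0 ≤ sin ψ := sin_nonneg_of_nonneg_of_le_pi hψ.1 (by linarith [hψ.2, pi_pos])
  ext x
  have hpythagoras := Submodule.norm_sq_eq_add_norm_sq_projection x (ℝ ∙ c)
  rw [norm_orthogonalProjectionOnto_span_singleton hc, sq_abs] at hpythagoras
  have hsq : (‖x‖ * cos ψ) ^ 2 ≤ ⟪c, x⟫ ^ 2 ↔
      ‖(ℝ ∙ c)ᗮ.orthogonalProjectionOnto x‖ ^ 2 ≤ (sin ψ * ‖x‖) ^ 2 := by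
    rw [mul_pow, mul_pow, sin_sq]
    constructor <;> intro h <;> linarith
  rw [pow_le_pow_iff_left₀ (norm_nonneg _) (by positivity) two_ne_zero, sq_le_sq,
    abs_of_nonneg (by positivity)] at hsq
  simp only [sphericalCone, coneTube, halfLine, Submodule.mem_top, true_and, mem_ofPred_eq,
    inner_orthogonalProjectionOnto_span_singleton, ← hsq]
  constructor
  · intro h
    have h₀ := (by positivity : 0 ≤ ‖x‖ * cos ψ).trans h
    exact ⟨h₀, by rwa [abs_of_nonneg h₀]⟩
  · rintro ⟨h₀, h⟩
    rwa [abs_of_nonneg h₀] at h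

variable [MeasurableSpace E] [BorelSpace E]

lemma measurableSet_sphericalCone_top (c : E) (ψ : ℝ) :
    MeasurableSet (sphericalCone ⊤ c ψ) := by
  simp only [sphericalCone, Submodule.mem_top, true_and]
  exact measurableSet_le (by fun_prop) (by fun_prop)

lemma measurableSet_halfLine (c : E) : MeasurableSet (halfLine c) :=
  IsClosed.measurableSet (isClosed_le (by fun_prop) (by fun_prop))

lemma toSphere_real_halfLine [Nontrivial (ℝ ∙ c)] (hc : ‖c‖ = 1) :
    (volume : Measure (ℝ ∙ c)).toSphere.real ((↑) ⁻¹' halfLine c) = 1 := by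
  have hpre : LinearIsometryEquiv.toSpanUnitSingleton (𝕜 := ℝ) c hc ⁻¹'
      (halfLine c ∩ Metric.ball 0 1) = Ico 0 1 := by
    ext t
    have hinner : 0 ≤ ⟪c, t • c⟫ ↔ 0 ≤ t := by
      rw [inner_smul_right, real_inner_self_eq_norm_sq, hc, one_pow, mul_one]
    rw [mem_preimage, mem_inter_iff, mem_ball_zero_iff, LinearIsometryEquiv.norm_map, norm_eq_abs]
    exact ⟨fun ⟨h₀, h⟩ ↦ ⟨hinner.1 h₀, (abs_lt.1 h).2⟩,
      fun ⟨h₀, h⟩ ↦ ⟨hinner.2 h₀, by rwa [abs_of_nonneg h₀]⟩⟩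
  rw [measureReal_def, toSphere_preimage_coe_of_isConic _ (isConic_halfLine c),
    ← (LinearIsometryEquiv.toSpanUnitSingleton c hc).measurePreserving.measure_preimage_emb
      (LinearIsometryEquiv.toSpanUnitSingleton c hc).toHomeomorph.measurableEmbedding, hpre,
    finrank_span_singleton (norm_pos_iff.1 (hc ▸ one_pos))]
  simp

theorem toSphere_real_sphericalCone_top [FiniteDimensional ℝ E] (hE : 2 ≤ finrank ℝ E)
    (hc : ‖c‖ = 1) {ψ : ℝ} (hψ : ψ ∈ Icc 0 (π / 2)) :
    (volume : Measure E).toSphere.real ((↑) ⁻¹' sphericalCone ⊤ c ψ) =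
      unitSphereArea (finrank ℝ E - 1) * ∫ θ in 0..ψ, sin θ ^ (finrank ℝ E - 2) := by
  have hline : finrank ℝ (ℝ ∙ c) = 1 := finrank_span_singleton (norm_pos_iff.1 (hc ▸ one_pos))
  have hperp : finrank ℝ (ℝ ∙ c)ᗮ = finrank ℝ E - 1 := by
    have := (ℝ ∙ c).finrank_add_finrank_orthogonal
    omega
  have : Nontrivial (ℝ ∙ c) := nontrivial_of_finrank_pos (R := ℝ) (by omega)
  have : Nontrivial (ℝ ∙ c)ᗮ := nontrivial_of_finrank_pos (R := ℝ) (by omega)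
  rw [sphericalCone_top_eq_coneTube hc hψ, toSphere_real_coneTube
      (isConic_halfLine c) (measurableSet_halfLine c)
      (sin_nonneg_of_nonneg_of_le_pi hψ.1 (by linarith [hψ.2, pi_pos])),
    toSphere_real_halfLine hc, arcsin_sin (by linarith [hψ.1, pi_pos]) hψ.2, hline, hperp]
  simp [Nat.sub_sub]

end SphericalCone

section ApproxCone

variable {E : Type*} [NormedAddCommGroup E] [InnerProductSpace ℝ E]

lemma approxCone_subset_coneTube {C : ConvexCone ℝ E} {U : Submodule ℝ E}
    [U.HasOrthogonalProjection] {K : Set U} (hspan : Submodule.span ℝ (C : Set E) = U)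
    (hCK : (C : Set E) ⊆ (↑) '' K) (ε : ℝ) :
    approxCone C ε ⊆ coneTube U K ε := by
  rintro w ⟨u, hu, v, hv, rfl, hle⟩
  rw [hspan] at hv
  obtain ⟨u, huK, rfl⟩ := hCK hu
  have hPu : U.orthogonalProjectionOnto (u + v) = u := by
    rw [map_add, Submodule.orthogonalProjectionOnto_apply_of_mem_orthogonal hv, add_zero,
      U.orthogonalProjectionOnto_mem_subspace_eq_self]
  have hPv : Uᗮ.orthogonalProjectionOnto (u + v) = ⟨v, hv⟩ := by
    rw [map_add, Submodule.orthogonalProjectionOnto_apply_of_mem_orthogonal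
      (U.le_orthogonal_orthogonal u.2), zero_add]
    exact Uᗮ.orthogonalProjectionOnto_mem_subspace_eq_self ⟨v, hv⟩
  exact ⟨by rwa [hPu], by rwa [hPv]⟩

lemma sphericalCone_eq_image_coe (U : Submodule ℝ E) (c : U) (ψ : ℝ) :
    sphericalCone U (c : E) ψ = (↑) '' sphericalCone (⊤ : Submodule ℝ U) c ψ := by
  ext x
  simp [sphericalCone, and_comm]

variable [FiniteDimensional ℝ E] [MeasurableSpace E] [BorelSpace E]

lemma toSphere_real_coneTube_sphericalCone_le {U : Submodule ℝ E} (hU : 2 ≤ finrank ℝ U)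
    (hUE : finrank ℝ U < finrank ℝ E) {c : U} (hc : ‖c‖ = 1) {ψ : ℝ} (hψ : ψ ∈ Icc 0 (π / 2))
    {ε : ℝ} (hε : 0 ≤ ε) :
    (volume : Measure E).toSphere.real ((↑) ⁻¹' coneTube U (sphericalCone ⊤ c ψ) ε) ≤
      unitSphereArea (finrank ℝ U - 1) * unitSphereArea (finrank ℝ Uᗮ) / finrank ℝ Uᗮ *
        ε ^ finrank ℝ Uᗮ * ∫ x in 0..ψ, sin x ^ (finrank ℝ U - 2) := by
  have : Nontrivial U := nontrivial_of_finrank_pos (R := ℝ) (by omega)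
  have hdim := U.finrank_add_finrank_orthogonal
  have : Nontrivial Uᗮ := nontrivial_of_finrank_pos (R := ℝ) (by omega)
  have harea := unitSphereArea_pos (n := finrank ℝ U - 1) (by omega)
  have harea' := unitSphereArea_pos (n := finrank ℝ Uᗮ) (by omega)
  have hintegral := integral_sin_pow_nonneg (finrank ℝ U - 2)
    ⟨hψ.1, hψ.2.trans (half_le_self pi_pos.le)⟩
  rw [toSphere_real_coneTube (isConic_sphericalCone ⊤ c ψ)
      (measurableSet_sphericalCone_top c ψ) hε,
    toSphere_real_sphericalCone_top hU hc hψ]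
  have hslice := integral_cos_pow_mul_sin_pow_le (a := finrank ℝ U - 1) (by omega)
    (finrank ℝ Uᗮ - 1) hε
  rw [← Nat.cast_add_one, Nat.sub_add_cancel finrank_pos] at hslice
  refine (mul_le_mul_of_nonneg_left hslice (by positivity)).trans_eq ?_
  ring

theorem stmt_11_general {d : ℕ} (hd : 2 ≤ d) (hdE : d < finrank ℝ E) (C : ConvexCone ℝ E)
    (hCdim : finrank ℝ (Submodule.span ℝ (C : Set E)) = d) (U : Submodule ℝ E)
    (hUdim : finrank ℝ U = d) (c : E) (hcU : c ∈ U) (hc : ‖c‖ = 1) {ψ : ℝ}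
    (hψ : ψ ∈ Icc 0 (π / 2)) (hsub : (C : Set E) ⊆ sphericalCone U c ψ) {ε : ℝ} (hε : 0 ≤ ε) :
    (volume : Measure E).toSphere.real ((↑) ⁻¹' approxCone C ε) /
        (volume : Measure E).toSphere.real univ ≤
      Gamma ((finrank ℝ E : ℝ) / 2) /
          (Gamma (((finrank ℝ E : ℝ) - d + 1) / 2) * Gamma (((d : ℝ) - 1) / 2)) *
        ε ^ (finrank ℝ E - d) * ∫ x in 0..ψ, sin x ^ (d - 2) := by
  have hspan : Submodule.span ℝ (C : Set E) = U :=
    Submodule.eq_of_le_of_finrank_eq (Submodule.span_le.2 fun x hx ↦ (hsub hx).1)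
      (hCdim.trans hUdim.symm)
  lift c to U using hcU
  subst hUdim
  have hdim := U.finrank_add_finrank_orthogonal
  have : Nontrivial E := nontrivial_of_finrank_pos (R := ℝ) (by omega)
  have harea := unitSphereArea_mul_unitSphereArea_le (finrank ℝ U - 1) (k := finrank ℝ Uᗮ)
    (by omega) (by omega)
  rw [show finrank ℝ U - 1 + finrank ℝ Uᗮ + 1 = finrank ℝ E by omega,
    Nat.cast_sub (by omega), Nat.cast_one] at harea
  have hsub' : approxCone C ε ⊆ coneTube U (sphericalCone ⊤ c ψ) ε :=
    approxCone_subset_coneTube hspan (hsub.trans_eq (sphericalCone_eq_image_coe U c ψ)) ε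
  rw [toSphere_real_univ_eq_unitSphereArea, div_le_iff₀ (unitSphereArea_pos finrank_pos.ne'),
    show finrank ℝ E - finrank ℝ U = finrank ℝ Uᗮ by omega,
    show (finrank ℝ E : ℝ) - finrank ℝ U = finrank ℝ Uᗮ by rw [← hdim]; push_cast; ring]
  calc (volume : Measure E).toSphere.real ((↑) ⁻¹' approxCone C ε)
      ≤ (volume : Measure E).toSphere.real ((↑) ⁻¹' coneTube U (sphericalCone ⊤ c ψ) ε) :=
        measureReal_mono (preimage_mono hsub')
    _ ≤ _ := toSphere_real_coneTube_sphericalCone_le hd hdE hc hψ hε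
    _ ≤ _ := mul_le_mul_of_nonneg_right (mul_le_mul_of_nonneg_right harea (by positivity))
        (integral_sin_pow_nonneg _ ⟨hψ.1, hψ.2.trans (half_le_self pi_pos.le)⟩)
    _ = _ := by ring

end ApproxCone

lemma sphMu_eq_div (D : ℕ) (A : Set (EuclideanSpace ℝ (Fin D))) :
    sphMu D A =
      (volume : Measure (EuclideanSpace ℝ (Fin D))).toSphere.real ((↑) ⁻¹' A) /
        (volume : Measure (EuclideanSpace ℝ (Fin D))).toSphere.real univ := by
  rw [sphMu, sphericalMeasure, Measure.smul_apply, smul_eq_mul, ENNReal.toReal_mul,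
    ENNReal.toReal_inv, measureReal_def, measureReal_def, inv_mul_eq_div]

/-- **Hyperspherical-coordinates upper bound on `μ(C^ε)` (Proposition 2).** Let `2 ≤ d < D`
and let `C ⊆ ℝ^D` be a `d`-dimensional convex cone contained in a `d`-dimensional spherical
cone `P^d[c,ψ]` for a unit vector `c` and `ψ ∈ (0,π/2)`. Then for every `ε ∈ (0,1)`,
`μ(C^ε) ≤ (Γ(D/2)/(Γ((D−d+1)/2)·Γ((d−1)/2))) · ε^{D−d} · ∫₀^ψ sin^{d−2} x dx`. -/
theorem stmt_11 (D d : ℕ) (hd : 2 ≤ d) (hdD : d < D)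
    (C : ConvexCone ℝ (EuclideanSpace ℝ (Fin D)))
    (hCdim : Module.finrank ℝ
      (Submodule.span ℝ (C : Set (EuclideanSpace ℝ (Fin D)))) = d)
    (U : Submodule ℝ (EuclideanSpace ℝ (Fin D))) (hUdim : Module.finrank ℝ U = d)
    (c : EuclideanSpace ℝ (Fin D)) (hcU : c ∈ U) (hc : ‖c‖ = 1)
    (ψ : ℝ) (hψ : ψ ∈ Set.Ioo 0 (Real.pi / 2))
    (hsub : (C : Set (EuclideanSpace ℝ (Fin D))) ⊆ sphericalCone U c ψ)
    (ε : ℝ) (hε : ε ∈ Set.Ioo (0 : ℝ) 1) :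
    sphMu D (approxCone C ε) ≤
      Real.Gamma ((D : ℝ) / 2) /
          (Real.Gamma (((D : ℝ) - d + 1) / 2) * Real.Gamma (((d : ℝ) - 1) / 2)) *
        ε ^ (D - d) * ∫ x in (0 : ℝ)..ψ, Real.sin x ^ (d - 2) := by
  rw [sphMu_eq_div]
  simpa using stmt_11_general hd (by simpa) C hCdim U hUdim c hcU hc (Ioo_subset_Icc_self hψ) hsub
    hε.1.le
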